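/- Let T be a tree with exactly k flexible vertices. If T has exactly x critical 3-paths and exactly (k − 3x)/2 insulated α₃-critical edges, then the number of maximum dissociation sets of T is at most 3^x · 2^{(k−3x)/2}. -/

import Mathlib

open SimpleGraph

/-- `l` is a (not necessarily induced) `k`-path in `G`: a list of `k` pairwise distinct
vertices in which consecutive vertices are adjacent. -/
def IsKPath {V : Type*} (G : SimpleGraph V) (k : ℕ) (l : List V) : Prop :=
  l.length = k ∧ l.Nodup ∧ l.Chain' G.Adj

/-- A `k`-matching in `G`: a finite set of pairwise vertex-disjoint `k`-paths. -/
def IsKMatching {V : Type*} (G : SimpleGraph V) (k : ℕ) (M : Finset (List V)) : Prop :=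
  (∀ l ∈ M, IsKPath G k l) ∧
    (M : Set (List V)).Pairwise fun l₁ l₂ => ∀ v ∈ l₁, v ∉ l₂

/-- The `k`-matching number `μ_k(G)`: the maximum cardinality of a `k`-matching. -/
noncomputable def kMatchNum {V : Type*} (G : SimpleGraph V) (k : ℕ) : ℕ :=
  sSup {n | ∃ M : Finset (List V), IsKMatching G k M ∧ M.card = n}

/-- A maximum `k`-matching: a `k`-matching of cardinality `μ_k(G)`. -/
def IsMaxKMatching {V : Type*} (G : SimpleGraph V) (k : ℕ) (M : Finset (List V)) : Prop :=
  IsKMatching G k M ∧ M.card = kMatchNum G k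

/-- A `k`-independent set: a set of vertices whose induced subgraph contains no `k`-path. -/
def IsKIndepSet {V : Type*} (G : SimpleGraph V) (k : ℕ) (S : Finset V) : Prop :=
  ∀ l : List V, IsKPath G k l → ¬ (∀ v ∈ l, v ∈ S)

/-- The `k`-independence number `α_k(G)`. -/
noncomputable def kIndepNum {V : Type*} (G : SimpleGraph V) (k : ℕ) : ℕ :=
  sSup {n | ∃ S : Finset V, IsKIndepSet G k S ∧ S.card = n}

/-- A `k`-vertex cover: a set of vertices meeting every `k`-path of `G`. -/
def IsKCover {V : Type*} (G : SimpleGraph V) (k : ℕ) (C : Finset V) : Prop :=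
  ∀ l : List V, IsKPath G k l → ∃ v ∈ l, v ∈ C

/-- The `k`-vertex cover number `τ_k(G)`. -/
noncomputable def kCoverNum {V : Type*} (G : SimpleGraph V) (k : ℕ) : ℕ :=
  sInf {n | ∃ C : Finset V, IsKCover G k C ∧ C.card = n}

/-- A dissociation set: a set of vertices inducing a subgraph of maximum degree at most 1,
i.e. every vertex of `S` has at most one neighbour inside `S`. -/
def IsDissocSet {V : Type*} (G : SimpleGraph V) (S : Finset V) : Prop :=
  ∀ v ∈ S, ∀ u ∈ S, ∀ w ∈ S, G.Adj v u → G.Adj v w → u = w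

/-- The dissociation number `α₃(G)`. -/
noncomputable def dissNum {V : Type*} (G : SimpleGraph V) : ℕ :=
  sSup {n | ∃ S : Finset V, IsDissocSet G S ∧ S.card = n}

/-- A maximum dissociation set: a dissociation set of cardinality `α₃(G)`. -/
def IsMaxDissocSet {V : Type*} (G : SimpleGraph V) (S : Finset V) : Prop :=
  IsDissocSet G S ∧ S.card = dissNum G

/-- `uv` is an `α₃`-critical edge of `G`: deleting it increases the dissociation number. -/
def IsAlpha3Critical {V : Type*} (G : SimpleGraph V) (u v : V) : Prop :=
  G.Adj u v ∧ dissNum G < dissNum (G.deleteEdges {s(u, v)})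

/-- `uv` is a `μ₃`-critical edge of `G`: deleting it decreases the `3`-matching number. -/
def IsMu3Critical {V : Type*} (G : SimpleGraph V) (u v : V) : Prop :=
  G.Adj u v ∧ kMatchNum (G.deleteEdges {s(u, v)}) 3 < kMatchNum G 3

/-- An insulated `α₃`-critical edge: an `α₃`-critical edge sharing no end-vertex with any
other `α₃`-critical edge. -/
def IsInsulated {V : Type*} (G : SimpleGraph V) (u v : V) : Prop :=
  IsAlpha3Critical G u v ∧
    ∀ x y : V, IsAlpha3Critical G x y → s(x, y) ≠ s(u, v) →
      x ≠ u ∧ x ≠ v ∧ y ≠ u ∧ y ≠ v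

/-- A flexible vertex: one lying in some but not all maximum dissociation sets. -/
def IsFlexible {V : Type*} (G : SimpleGraph V) (v : V) : Prop :=
  (∃ S : Finset V, IsMaxDissocSet G S ∧ v ∈ S) ∧
    (∃ S : Finset V, IsMaxDissocSet G S ∧ v ∉ S)

/-- The set of static-included vertices: vertices lying in every maximum dissociation set. -/
def staticIncluded {V : Type*} (G : SimpleGraph V) : Set V :=
  {v | ∀ S : Finset V, IsMaxDissocSet G S → v ∈ S}

/-- The set of static-excluded vertices: vertices lying in no maximum dissociation set. -/
def staticExcluded {V : Type*} (G : SimpleGraph V) : Set V :=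
  {v | ∀ S : Finset V, IsMaxDissocSet G S → v ∉ S}

/-- The (unordered) edge `uv` occurs as an edge of the path recorded by the list `l`. -/
def EdgeInList {V : Type*} (l : List V) (u v : V) : Prop :=
  ∃ p ∈ l.zip l.tail, p = (u, v) ∨ p = (v, u)

/-!
The tree enters only through the König property: the largest `3`-matching and the smallest
`3`-vertex cover have the same size. In a forest it holds because subtrees of a tree have the Helly
property: rooting the tree and choosing the subtree whose vertex nearest to the root is deepest,
that vertex lies in every subtree meeting the chosen one.

Fix a maximum `3`-matching `M`. The complement of a maximum dissociation set `S` is a minimum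
`3`-vertex cover, so `S` misses exactly one vertex of each path of `M`. Moreover every `α₃`-critical
edge lies inside a path of `M`, hence two intersecting critical edges lie in the same path. The
critical `3`-paths and the insulated critical edges therefore span pairwise disjoint blocks of
flexible vertices, and the assumption on their numbers says that these blocks contain all flexible
vertices. Every maximum dissociation set misses exactly one vertex of each block and agrees with
any other outside the blocks, so it is determined by the missed vertices.
-/

section SubtreeDuality

variable {V ι : Type*} {G : SimpleGraph V}

lemma dist_lt_of_mem_support_of_ne {u v w : V} {p : G.Walk u v} (hp : p.length = G.dist u v)
    (hw : w ∈ p.support) (hwv : w ≠ v) : G.dist u w < G.dist u v := by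
  classical
  exact (dist_le (p.takeUntil w hw)).trans_lt (hp ▸ p.length_takeUntil_lt_length hw hwv)

lemma isPath_append_of_support_inter {u v w : V} {p : G.Walk u v} {q : G.Walk v w}
    (hp : p.IsPath) (hq : q.IsPath) (hpq : ∀ z ∈ p.support, z ∈ q.support → z = v) :
    (p.append q).IsPath := by
  have hq' : (v :: q.support.tail).Nodup := by
    rw [q.cons_tail_support]; exact hq.support_nodup
  rw [Walk.isPath_def, Walk.support_append, List.nodup_append']
  refine ⟨hp.support_nodup, hq'.of_cons, fun z hzp hzq ↦ ?_⟩
  obtain rfl := hpq z hzp (List.mem_of_mem_tail hzq)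
  exact hq'.notMem hzq

lemma exists_isPath_through_nearest (hG : G.Connected) {r v z : V} {B : Set V}
    (hB : (G.induce B).Connected) (hv : v ∈ B) (hmin : ∀ w ∈ B, G.dist r v ≤ G.dist r w)
    (hz : z ∈ B) :
    ∃ p : G.Walk r z, p.IsPath ∧ v ∈ p.support ∧
      ∀ w ∈ p.support, G.dist r w < G.dist r v ∨ w ∈ B := by
  obtain ⟨p, hp, hpv⟩ := hG.exists_path_of_dist r v
  obtain ⟨q, hq⟩ := hB.exists_isPath ⟨v, hv⟩ ⟨z, hz⟩
  have hqB : ∀ w ∈ (q.map (Embedding.induce B).toHom).support, w ∈ B := by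
    intro w hw
    obtain ⟨w, -, rfl⟩ := List.mem_map.1 (Walk.support_map _ q ▸ hw)
    exact w.2
  have hq' : (q.map (Embedding.induce B).toHom).IsPath := hq.map Subtype.val_injective
  refine ⟨p.append _, isPath_append_of_support_inter hp hq' fun w hwp hwq ↦ ?_,
    (Walk.mem_support_append_iff _ _).2 (.inl p.end_mem_support), fun w hw ↦ ?_⟩
  · by_contra hwv
    exact (dist_lt_of_mem_support_of_ne hpv hwp hwv).not_ge (hmin w (hqB w hwq))
  · obtain hw | hw := (Walk.mem_support_append_iff _ _).1 hw
    · obtain rfl | hwv := eq_or_ne w v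
      · exact .inr hv
      · exact .inl (dist_lt_of_mem_support_of_ne hpv hw hwv)
    · exact .inr (hqB w hw)

lemma exists_mem_of_not_disjoint_of_isAcyclic (hG : G.IsAcyclic) {F : Finset ι} (hF : F.Nonempty)
    {B : ι → Set V} (hB : ∀ i ∈ F, (G.induce (B i)).Connected) :
    ∃ i ∈ F, ∃ v ∈ B i, ∀ j ∈ F, ¬ Disjoint (B i) (B j) → v ∈ B j := by
  obtain ⟨i₀, hi₀⟩ := hF
  obtain ⟨⟨r, -⟩⟩ := (hB i₀ hi₀).nonempty
  have : Nonempty V := ⟨r⟩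
  obtain ⟨T, hGT, -, hT⟩ := connected_top.exists_isTree_le_of_le_of_isAcyclic le_top hG
  have hnearest : ∀ i ∈ F, ∃ v ∈ B i, ∀ w ∈ B i, T.dist r v ≤ T.dist r w := fun i hi ↦
    have hne := Set.nonempty_coe_sort.1 (hB i hi).nonempty
    ⟨_, Function.argminOn_mem (T.dist r) (B i) hne, fun _ ↦ Function.argminOn_le (T.dist r) (B i)⟩
  choose! root hrootB hroot using hnearest
  obtain ⟨i, hi, hmax⟩ := F.exists_max_image (T.dist r ∘ root) ⟨i₀, hi₀⟩
  refine ⟨i, hi, root i, hrootB i hi, fun j hj hij ↦ ?_⟩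
  obtain ⟨z, hzi, hzj⟩ := Set.not_disjoint_iff.1 hij
  have hpath : ∀ k ∈ F, z ∈ B k → ∃ p : T.Walk r z, p.IsPath ∧ root k ∈ p.support ∧
      ∀ w ∈ p.support, T.dist r w < T.dist r (root k) ∨ w ∈ B k := fun k hk hzk ↦
    exists_isPath_through_nearest hT.connected ((hB k hk).mono (comap_monotone _ hGT))
      (hrootB k hk) (hroot k hk) hzk
  obtain ⟨p, hp, hip, -⟩ := hpath i hi hzi
  obtain ⟨p', hp', -, hp'B⟩ := hpath j hj hzj
  obtain rfl := (hT.existsUnique_path r z).unique hp hp'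
  exact (hp'B _ hip).resolve_left (hmax j hj).not_gt

theorem exists_pairwiseDisjoint_cover_of_isAcyclic (hG : G.IsAcyclic) (F : Finset ι)
    {B : ι → Set V} (hB : ∀ i ∈ F, (G.induce (B i)).Connected) :
    ∃ M ⊆ F, (M : Set ι).PairwiseDisjoint B ∧
      ∃ C : Finset V, (∀ i ∈ F, ∃ v ∈ B i, v ∈ C) ∧ C.card ≤ M.card := by
  classical
  induction F using Finset.strongInduction with
  | H F ih =>
    obtain rfl | hF := F.eq_empty_or_nonempty
    · exact ⟨∅, by simp⟩
    obtain ⟨i, hi, v, hvi, hv⟩ := exists_mem_of_not_disjoint_of_isAcyclic hG hF hB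
    let F' := {j ∈ F | v ∉ B j}
    have hF'F : F' ⊂ F := Finset.filter_ssubset.2 ⟨i, hi, not_not.2 hvi⟩
    obtain ⟨M, hMF', hM, C, hC, hCM⟩ := ih F' hF'F fun j hj ↦ hB j (hF'F.subset hj)
    have hvM : ∀ j ∈ M, v ∉ B j := fun j hj ↦ (Finset.mem_filter.1 (hMF' hj)).2
    have hdisj : ∀ j ∈ M, Disjoint (B i) (B j) := fun j hj ↦
      not_not.1 fun h ↦ hvM j hj (hv j (hF'F.subset (hMF' hj)) h)
    refine ⟨insert i M, Finset.insert_subset hi (hMF'.trans hF'F.subset), ?_, insert v C, ?_, ?_⟩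
    · rw [Finset.coe_insert]
      exact hM.insert fun j hj _ ↦ hdisj j hj
    · intro j hj
      by_cases hvj : v ∈ B j
      · exact ⟨v, hvj, Finset.mem_insert_self v C⟩
      · obtain ⟨w, hwj, hwC⟩ := hC j (Finset.mem_filter.2 ⟨hj, hvj⟩)
        exact ⟨w, hwj, Finset.mem_insert_of_mem hwC⟩
    · rw [Finset.card_insert_of_notMem fun hiM ↦ hvM i hiM hvi]
      exact (Finset.card_insert_le v C).trans (Nat.succ_le_succ hCM)

end SubtreeDuality

section PathsAndCovers

variable {V : Type*} {G : SimpleGraph V} {k : ℕ} {l : List V}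

lemma isKPath_three_iff :
    IsKPath G 3 l ↔ ∃ a b c, l = [a, b, c] ∧ a ≠ c ∧ G.Adj a b ∧ G.Adj b c := by
  constructor
  · rintro ⟨hlen, hnodup, hchain⟩
    obtain ⟨a, b, c, rfl⟩ := List.length_eq_three.1 hlen
    have hne : a ≠ c := by rintro rfl; simp at hnodup
    exact ⟨a, b, c, rfl, hne, by simpa using (show List.IsChain G.Adj _ from hchain)⟩
  · rintro ⟨a, b, c, rfl, hac, hab, hbc⟩
    exact ⟨rfl, by simp [hac, hab.ne, hbc.ne], show List.IsChain G.Adj _ by simp [hab, hbc]⟩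

lemma IsKPath.ne_nil (hl : IsKPath G k l) (hk : k ≠ 0) : l ≠ [] :=
  List.ne_nil_of_length_pos (hl.1 ▸ Nat.pos_of_ne_zero hk)

lemma IsKPath.connected_induce (hl : IsKPath G k l) (hk : k ≠ 0) :
    (G.induce {v | v ∈ l}).Connected := by
  have hchain : l.IsChain G.Adj := hl.2.2
  have hconn := (Walk.ofSupport l (hl.ne_nil hk) hchain).connected_induce_support
  rwa [Walk.support_ofSupport] at hconn

lemma IsKPath.deleteEdges {u v : V} (hl : IsKPath G k l) (huv : ¬ (u ∈ l ∧ v ∈ l)) :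
    IsKPath (G.deleteEdges {s(u, v)}) k l := by
  refine ⟨hl.1, hl.2.1, List.IsChain.imp_of_mem_imp (fun a b ha hb hab ↦ ?_) hl.2.2⟩
  rw [deleteEdges_adj, Set.mem_singleton_iff, Sym2.eq_iff]
  refine ⟨hab, ?_⟩
  rintro (⟨rfl, rfl⟩ | ⟨rfl, rfl⟩)
  · exact huv ⟨ha, hb⟩
  · exact huv ⟨hb, ha⟩

lemma IsKPath.toFinset_eq_of_subset [DecidableEq V] {s : Finset V} (hl : IsKPath G k l)
    (hs : s ⊆ l.toFinset) (hk : k ≤ s.card) : s = l.toFinset :=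
  Finset.eq_of_subset_of_card_le hs (l.toFinset_card_le.trans (hl.1.trans_le hk))

lemma isKCover_univ [Fintype V] (hk : k ≠ 0) : IsKCover G k Finset.univ := fun l hl ↦
  (List.exists_mem_of_ne_nil l (hl.ne_nil hk)).imp fun v hv ↦ ⟨hv, Finset.mem_univ v⟩

lemma IsKCover.kCoverNum_le {C : Finset V} (hC : IsKCover G k C) : kCoverNum G k ≤ C.card :=
  Nat.sInf_le ⟨C, hC, rfl⟩

lemma exists_isKCover_card_eq_kCoverNum [Finite V] (hk : k ≠ 0) :
    ∃ C : Finset V, IsKCover G k C ∧ C.card = kCoverNum G k := by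
  cases nonempty_fintype V
  exact Nat.sInf_mem (s := {n | ∃ C : Finset V, IsKCover G k C ∧ C.card = n})
    ⟨_, _, isKCover_univ hk, rfl⟩

variable {M : Finset (List V)} {C : Finset V}

lemma IsKMatching.eq_of_mem_of_mem {l' : List V} {v : V} (hM : IsKMatching G k M) (hl : l ∈ M)
    (hl' : l' ∈ M) (hv : v ∈ l) (hv' : v ∈ l') : l = l' :=
  hM.2.eq hl hl' fun h ↦ h v hv hv'

lemma IsKMatching.card_le_of_forall_exists_mem (hM : IsKMatching G k M)
    (hC : ∀ l ∈ M, ∃ v ∈ l, v ∈ C) : M.card ≤ C.card :=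
  Finset.card_le_card_of_forall_subsingleton (fun l v ↦ v ∈ l)
    (fun l hl ↦ (hC l hl).imp fun _ ↦ And.symm)
    fun _ _ _ hl _ hl' ↦ hM.eq_of_mem_of_mem hl.1 hl'.1 hl.2 hl'.2

lemma IsKMatching.existsUnique_mem_of_card_le (hM : IsKMatching G k M) (hC : IsKCover G k C)
    (hCM : C.card ≤ M.card) (hl : l ∈ M) : ∃! v, v ∈ l ∧ v ∈ C := by
  classical
  refine existsUnique_of_exists_of_unique (hC l (hM.1 l hl)) ?_
  by_contra! ⟨v, w, ⟨hvl, hvC⟩, ⟨hwl, hwC⟩, hvw⟩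
  have hhit : ∀ l' ∈ M, ∃ z ∈ l', z ∈ C.erase w := by
    intro l' hl'
    by_cases hwl' : w ∈ l'
    · obtain rfl := hM.eq_of_mem_of_mem hl hl' hwl hwl'
      exact ⟨v, hvl, Finset.mem_erase.2 ⟨hvw, hvC⟩⟩
    · obtain ⟨z, hzl', hzC⟩ := hC l' (hM.1 l' hl')
      exact ⟨z, hzl', Finset.mem_erase.2 ⟨fun h ↦ hwl' (h ▸ hzl'), hzC⟩⟩
  exact (Finset.card_erase_lt_of_mem hwC).not_ge
    (hCM.trans (hM.card_le_of_forall_exists_mem hhit))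

lemma IsKCover.card_le_of_isKMatching (hC : IsKCover G k C) (hM : IsKMatching G k M) :
    M.card ≤ C.card :=
  hM.card_le_of_forall_exists_mem fun l hl ↦ hC l (hM.1 l hl)

lemma bddAbove_card_isKMatching [Finite V] (hk : k ≠ 0) :
    BddAbove {n | ∃ M : Finset (List V), IsKMatching G k M ∧ M.card = n} := by
  cases nonempty_fintype V
  refine ⟨Fintype.card V, ?_⟩
  rintro _ ⟨M, hM, rfl⟩
  exact (isKCover_univ hk).card_le_of_isKMatching hM

lemma exists_isMaxKMatching [Finite V] (hk : k ≠ 0) : ∃ M, IsMaxKMatching G k M :=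
  Nat.sSup_mem (s := {n | ∃ M : Finset (List V), IsKMatching G k M ∧ M.card = n})
    ⟨0, ∅, by simp [IsKMatching], rfl⟩ (bddAbove_card_isKMatching hk)

theorem kMatchNum_eq_kCoverNum_of_isAcyclic [Finite V] (hG : G.IsAcyclic) (hk : k ≠ 0) :
    kMatchNum G k = kCoverNum G k := by
  obtain ⟨M, hM, hMcard⟩ := exists_isMaxKMatching (G := G) hk
  obtain ⟨C, hC, hCcard⟩ := exists_isKCover_card_eq_kCoverNum (G := G) hk
  refine le_antisymm (hMcard ▸ hCcard ▸ hC.card_le_of_isKMatching hM) ?_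
  have hfin : {l | IsKPath G k l}.Finite := (List.finite_length_eq V k).subset fun _ hl ↦ hl.1
  obtain ⟨M', hM'paths, hM'disj, C', hC', hCM'⟩ :=
    exists_pairwiseDisjoint_cover_of_isAcyclic hG hfin.toFinset (B := fun l ↦ {v | v ∈ l})
      fun l hl ↦ (hfin.mem_toFinset.1 hl).connected_induce hk
  have hM' : IsKMatching G k M' := ⟨fun l hl ↦ hfin.mem_toFinset.1 (hM'paths hl),
    fun _ hl _ hl' hne v hv ↦ Set.disjoint_left.1 (hM'disj hl hl' hne) hv⟩
  calc kCoverNum G k ≤ C'.card :=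
        IsKCover.kCoverNum_le fun l hl ↦ hC' l (hfin.mem_toFinset.2 hl)
    _ ≤ M'.card := hCM'
    _ ≤ kMatchNum G k := le_csSup (bddAbove_card_isKMatching hk) ⟨M', hM', rfl⟩

end PathsAndCovers

section DissociationSets

variable {V : Type*} {G : SimpleGraph V} {S : Finset V}

lemma isDissocSet_iff_isKIndepSet_three : IsDissocSet G S ↔ IsKIndepSet G 3 S := by
  constructor
  · intro hS l hl hlS
    obtain ⟨a, b, c, rfl, hac, hab, hbc⟩ := isKPath_three_iff.1 hl
    exact hac (hS b (hlS b (by simp)) a (hlS a (by simp)) c (hlS c (by simp)) hab.symm hbc)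
  · intro hS v hv u hu w hw hvu hvw
    by_contra huw
    exact hS [u, v, w] (isKPath_three_iff.2 ⟨u, v, w, rfl, huw, hvu.symm, hvw⟩)
      (by simp [hv, hu, hw])

lemma isKCover_three_compl_iff [Fintype V] [DecidableEq V] :
    IsKCover G 3 Sᶜ ↔ IsDissocSet G S := by
  simp [isDissocSet_iff_isKIndepSet_three, IsKCover, IsKIndepSet]

lemma bddAbove_card_isDissocSet [Finite V] :
    BddAbove {n | ∃ S : Finset V, IsDissocSet G S ∧ S.card = n} := by
  cases nonempty_fintype V
  exact ⟨Fintype.card V, by rintro _ ⟨S, -, rfl⟩; exact S.card_le_univ⟩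

lemma IsDissocSet.card_le_dissNum [Finite V] (hS : IsDissocSet G S) : S.card ≤ dissNum G :=
  le_csSup bddAbove_card_isDissocSet ⟨S, hS, rfl⟩

lemma exists_isMaxDissocSet [Finite V] (G : SimpleGraph V) : ∃ S, IsMaxDissocSet G S :=
  Nat.sSup_mem (s := {n | ∃ S : Finset V, IsDissocSet G S ∧ S.card = n})
    ⟨0, ∅, by simp [IsDissocSet], rfl⟩ bddAbove_card_isDissocSet

lemma dissNum_add_kCoverNum_three [Fintype V] :
    dissNum G + kCoverNum G 3 = Fintype.card V := by
  classical
  obtain ⟨S, hS, hScard⟩ := exists_isMaxDissocSet G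
  obtain ⟨C, hC, hCcard⟩ := exists_isKCover_card_eq_kCoverNum (G := G) three_ne_zero
  have hle := (isKCover_three_compl_iff.2 hS).kCoverNum_le
  have hge := (isKCover_three_compl_iff (S := Cᶜ).1 (by rwa [compl_compl])).card_le_dissNum
  have hScompl := S.card_add_card_compl
  have hCcompl := C.card_add_card_compl
  omega

lemma IsMaxDissocSet.existsUnique_notMem [Finite V] {M : Finset (List V)} {l : List V}
    (hS : IsMaxDissocSet G S) (hM : IsKMatching G 3 M) (hMcard : M.card = kCoverNum G 3)
    (hl : l ∈ M) : ∃! v, v ∈ l ∧ v ∉ S := by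
  classical
  cases nonempty_fintype V
  have hcompl : Sᶜ.card ≤ M.card := by
    have hScompl := S.card_add_card_compl
    have hgallai := dissNum_add_kCoverNum_three (G := G)
    have hScard := hS.2
    omega
  simpa only [Finset.mem_compl] using
    hM.existsUnique_mem_of_card_le (isKCover_three_compl_iff.2 hS.1) hcompl hl

end DissociationSets

section CriticalEdges

variable {V : Type*} {G : SimpleGraph V} {u v w : V}

lemma IsDissocSet.mono {S S' : Finset V} (hS' : IsDissocSet G S') (hSS' : S ⊆ S') :
    IsDissocSet G S := fun v hv u hu w hw ↦
  hS' v (hSS' hv) u (hSS' hu) w (hSS' hw)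

lemma IsDissocSet.of_deleteEdges {S : Finset V} (hS : IsDissocSet (G.deleteEdges {s(u, v)}) S)
    (huv : ¬ (u ∈ S ∧ v ∈ S)) : IsDissocSet G S := by
  rw [isDissocSet_iff_isKIndepSet_three] at hS ⊢
  exact fun l hl hlS ↦ hS l (hl.deleteEdges fun h ↦ huv ⟨hlS u h.1, hlS v h.2⟩) hlS

lemma IsAlpha3Critical.symm (huv : IsAlpha3Critical G u v) : IsAlpha3Critical G v u :=
  ⟨huv.1.symm, Sym2.eq_swap (a := u) (b := v) ▸ huv.2⟩

lemma IsAlpha3Critical.exists_isDissocSet_deleteEdges [Finite V] (huv : IsAlpha3Critical G u v) :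
    ∃ S, IsDissocSet (G.deleteEdges {s(u, v)}) S ∧ dissNum G < S.card :=
  (exists_isMaxDissocSet (G.deleteEdges {s(u, v)})).imp fun _ hS ↦ ⟨hS.1, huv.2.trans_eq hS.2.symm⟩

lemma IsAlpha3Critical.isFlexible_left [Finite V] (huv : IsAlpha3Critical G u v) :
    IsFlexible G u := by
  classical
  obtain ⟨S, hS, hScard⟩ := huv.exists_isDissocSet_deleteEdges
  obtain ⟨huS, hvS⟩ : u ∈ S ∧ v ∈ S := by
    by_contra h
    exact (hS.of_deleteEdges h).card_le_dissNum.not_gt hScard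
  have hmax : ∀ w ∈ S, ¬ (u ∈ S.erase w ∧ v ∈ S.erase w) → IsMaxDissocSet G (S.erase w) := by
    intro w hwS hw
    have hdissoc := (hS.mono (S.erase_subset w)).of_deleteEdges hw
    refine ⟨hdissoc, hdissoc.card_le_dissNum.antisymm ?_⟩
    rw [Finset.card_erase_of_mem hwS]
    exact Nat.le_sub_one_of_lt hScard
  exact ⟨⟨S.erase v, hmax v hvS (by simp), by simp [huS, huv.1.ne]⟩,
    ⟨S.erase u, hmax u huS (by simp), by simp⟩⟩

lemma IsAlpha3Critical.exists_mem_isKMatching [Finite V] {M : Finset (List V)}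
    (huv : IsAlpha3Critical G u v) (hM : IsKMatching G 3 M) (hMcard : M.card = kCoverNum G 3) :
    ∃ l ∈ M, u ∈ l ∧ v ∈ l := by
  classical
  cases nonempty_fintype V
  obtain ⟨S, hS, hScard⟩ := huv.exists_isDissocSet_deleteEdges
  have hcompl : Sᶜ.card < M.card := by
    have hScompl := S.card_add_card_compl
    have hgallai := dissNum_add_kCoverNum_three (G := G)
    omega
  obtain ⟨l, hl, hlS⟩ : ∃ l ∈ M, ∀ z ∈ l, z ∈ S := by
    by_contra! h
    exact hcompl.not_ge (hM.card_le_of_forall_exists_mem (by simpa using h))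
  refine ⟨l, hl, ?_⟩
  by_contra huvl
  exact isDissocSet_iff_isKIndepSet_three.1 hS l ((hM.1 l hl).deleteEdges huvl) hlS

/-- A set of vertices left by no `α₃`-critical edge, i.e. a union of connected components of the
graph formed by the `α₃`-critical edges. -/
def IsCriticalClosed (G : SimpleGraph V) (s : Finset V) : Prop :=
  ∀ ⦃u v⦄, IsAlpha3Critical G u v → u ∈ s → v ∈ s

lemma IsKMatching.isCriticalClosed_toFinset [Finite V] [DecidableEq V] {M : Finset (List V)}
    {l : List V} (hM : IsKMatching G 3 M) (hMcard : M.card = kCoverNum G 3) (hl : l ∈ M) :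
    IsCriticalClosed G l.toFinset := by
  intro u v huv hu
  obtain ⟨l', hl', hul', hvl'⟩ := huv.exists_mem_isKMatching hM hMcard
  obtain rfl := hM.eq_of_mem_of_mem hl hl' (List.mem_toFinset.1 hu) hul'
  exact List.mem_toFinset.2 hvl'

lemma IsInsulated.isCriticalClosed [DecidableEq V] (huv : IsInsulated G u v) :
    IsCriticalClosed G {u, v} := by
  intro z w hzw hz
  by_cases he : s(z, w) = s(u, v)
  · have hw : w ∈ s(u, v) := he ▸ Sym2.mem_mk_right z w
    simpa using hw
  · obtain ⟨hzu, hzv, -, -⟩ := huv.2 z w hzw he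
    simp [hzu, hzv] at hz

end CriticalEdges

section CriticalBlocks

variable {V : Type*} {G : SimpleGraph V}

/-- The insulated `α₃`-critical edges of `G`. -/
def insulatedEdges (G : SimpleGraph V) : Set (Sym2 V) :=
  {e | ∃ u v : V, e = s(u, v) ∧ IsInsulated G u v}

variable [DecidableEq V] {B S s : Finset V} {M : Finset (List V)} {u v z : V}

/-- The vertex sets of the critical `3`-paths of `G`. Two critical `3`-paths on the same three
vertices are thus identified. -/
def criticalThreePaths (G : SimpleGraph V) : Set (Finset V) :=
  {s | ∃ a b c : V, s = {a, b, c} ∧ IsKPath G 3 [a, b, c] ∧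
    IsAlpha3Critical G a b ∧ IsAlpha3Critical G b c}

lemma card_eq_three_of_mem_criticalThreePaths (hs : s ∈ criticalThreePaths G) : s.card = 3 := by
  obtain ⟨a, b, c, rfl, hpath, -, -⟩ := hs
  simpa using List.toFinset_card_of_nodup hpath.2.1

lemma card_toFinset_of_mem_insulatedEdges {e : Sym2 V} (he : e ∈ insulatedEdges G) :
    e.toFinset.card = 2 := by
  obtain ⟨u, v, rfl, huv⟩ := he
  exact Sym2.card_toFinset_of_not_isDiag _ huv.1.1.ne

variable [Finite V]

/-- The vertex sets of the critical `3`-paths together with those of the insulated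
`α₃`-critical edges. -/
noncomputable def criticalBlocks (G : SimpleGraph V) : Finset (Finset V) :=
  (Set.toFinite (criticalThreePaths G)).toFinset ∪
    (Set.toFinite (insulatedEdges G)).toFinset.image Sym2.toFinset

lemma mem_criticalBlocks : B ∈ criticalBlocks G ↔
    B ∈ criticalThreePaths G ∨ ∃ u v, IsInsulated G u v ∧ B = {u, v} := by
  simp only [criticalBlocks, Finset.mem_union, Set.Finite.mem_toFinset, Finset.mem_image]
  refine or_congr_right ⟨?_, ?_⟩
  · rintro ⟨_, ⟨u, v, rfl, huv⟩, rfl⟩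
    exact ⟨u, v, huv, Sym2.toFinset_mk_eq⟩
  · rintro ⟨u, v, huv, rfl⟩
    exact ⟨_, ⟨u, v, rfl, huv⟩, Sym2.toFinset_mk_eq⟩

@[to_additive]
lemma prod_card_criticalBlocks {N : Type*} [CommMonoid N] (f : ℕ → N) :
    ∏ B ∈ criticalBlocks G, f B.card =
      f 3 ^ (criticalThreePaths G).ncard * f 2 ^ (insulatedEdges G).ncard := by
  rw [criticalBlocks, Finset.prod_union, Finset.prod_image, Set.ncard_eq_toFinset_card,
    Set.ncard_eq_toFinset_card]
  · congr 1 <;> refine Finset.prod_eq_pow_card fun b hb ↦ ?_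
    · rw [card_eq_three_of_mem_criticalThreePaths ((Set.Finite.mem_toFinset _).1 hb)]
    · rw [card_toFinset_of_mem_insulatedEdges ((Set.Finite.mem_toFinset _).1 hb)]
  · exact fun e _ e' _ hee' ↦ Sym2.ext fun z ↦ by
      rw [← Sym2.mem_toFinset, hee', Sym2.mem_toFinset]
  · refine Finset.disjoint_left.2 fun s hs hs' ↦ ?_
    obtain ⟨e, he, rfl⟩ := Finset.mem_image.1 hs'
    rw [Set.Finite.mem_toFinset] at hs he
    have hthree := card_eq_three_of_mem_criticalThreePaths hs
    have htwo := card_toFinset_of_mem_insulatedEdges he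
    omega

lemma exists_isAlpha3Critical_of_mem_criticalBlocks (hB : B ∈ criticalBlocks G) (hz : z ∈ B) :
    ∃ w, IsAlpha3Critical G z w := by
  obtain ⟨a, b, c, rfl, -, hab, hbc⟩ | ⟨u, v, huv, rfl⟩ := mem_criticalBlocks.1 hB
  · simp only [Finset.mem_insert, Finset.mem_singleton] at hz
    obtain rfl | rfl | rfl := hz
    exacts [⟨b, hab⟩, ⟨c, hbc⟩, ⟨b, hbc.symm⟩]
  · simp only [Finset.mem_insert, Finset.mem_singleton] at hz
    obtain rfl | rfl := hz
    exacts [⟨v, huv.1⟩, ⟨u, huv.1.symm⟩]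

lemma IsCriticalClosed.subset_of_mem_criticalBlocks (hs : IsCriticalClosed G s)
    (hB : B ∈ criticalBlocks G) (hzB : z ∈ B) (hzs : z ∈ s) : B ⊆ s := by
  have hiff : ∀ {u v}, IsAlpha3Critical G u v → (u ∈ s ↔ v ∈ s) := fun huv ↦
    ⟨hs huv, hs huv.symm⟩
  obtain ⟨a, b, c, rfl, -, hab, hbc⟩ | ⟨u, v, huv, rfl⟩ := mem_criticalBlocks.1 hB
  · have hab := hiff hab
    have hbc := hiff hbc
    grind
  · have huv := hiff huv.1
    grind

lemma exists_eq_toFinset_of_mem_criticalThreePaths (hM : IsKMatching G 3 M)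
    (hMcard : M.card = kCoverNum G 3) (hs : s ∈ criticalThreePaths G) :
    ∃ l ∈ M, s = l.toFinset := by
  have hcard := card_eq_three_of_mem_criticalThreePaths hs
  have hblock : s ∈ criticalBlocks G := mem_criticalBlocks.2 (.inl hs)
  obtain ⟨a, b, c, rfl, -, hab, -⟩ := hs
  obtain ⟨l, hl, hal, -⟩ := hab.exists_mem_isKMatching hM hMcard
  refine ⟨l, hl, (hM.1 l hl).toFinset_eq_of_subset ?_ hcard.ge⟩
  exact (hM.isCriticalClosed_toFinset hMcard hl).subset_of_mem_criticalBlocks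
    hblock (Finset.mem_insert_self a _) (List.mem_toFinset.2 hal)

lemma isCriticalClosed_of_mem_criticalBlocks (hM : IsKMatching G 3 M)
    (hMcard : M.card = kCoverNum G 3) (hB : B ∈ criticalBlocks G) : IsCriticalClosed G B := by
  obtain hB | ⟨u, v, huv, rfl⟩ := mem_criticalBlocks.1 hB
  · obtain ⟨l, hl, rfl⟩ := exists_eq_toFinset_of_mem_criticalThreePaths hM hMcard hB
    exact hM.isCriticalClosed_toFinset hMcard hl
  · exact huv.isCriticalClosed

lemma pairwiseDisjoint_criticalBlocks (hM : IsKMatching G 3 M)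
    (hMcard : M.card = kCoverNum G 3) :
    (criticalBlocks G : Set (Finset V)).PairwiseDisjoint id := by
  intro B hB B' hB' hne
  refine Finset.disjoint_left.2 fun z hz hz' ↦ hne (Finset.Subset.antisymm ?_ ?_)
  · exact (isCriticalClosed_of_mem_criticalBlocks hM hMcard hB').subset_of_mem_criticalBlocks
      hB hz hz'
  · exact (isCriticalClosed_of_mem_criticalBlocks hM hMcard hB).subset_of_mem_criticalBlocks
      hB' hz' hz

lemma IsFlexible.exists_mem_criticalBlocks (hz : IsFlexible G z) (hM : IsKMatching G 3 M)
    (hMcard : M.card = kCoverNum G 3)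
    (hcount : {v | IsFlexible G v}.ncard ≤
      3 * (criticalThreePaths G).ncard + 2 * (insulatedEdges G).ncard) :
    ∃ B ∈ criticalBlocks G, z ∈ B := by
  have hsubset : ((criticalBlocks G).biUnion id : Set V) ⊆ {v | IsFlexible G v} := by
    intro v hv
    obtain ⟨B, hB, hvB⟩ := Finset.mem_biUnion.1 hv
    obtain ⟨w, hvw⟩ := exists_isAlpha3Critical_of_mem_criticalBlocks hB hvB
    exact hvw.isFlexible_left
  have hcard : ((criticalBlocks G).biUnion id).card =
      3 * (criticalThreePaths G).ncard + 2 * (insulatedEdges G).ncard := by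
    rw [Finset.card_biUnion (pairwiseDisjoint_criticalBlocks hM hMcard)]
    simpa [mul_comm] using sum_card_criticalBlocks (G := G) id
  have heq := Set.eq_of_subset_of_ncard_le hsubset
    (hcount.trans_eq (by rw [Set.ncard_coe_finset, hcard]))
  exact Finset.mem_biUnion.1 (heq.ge hz)

lemma IsInsulated.existsUnique_notMem (huv : IsInsulated G u v) (hS : IsMaxDissocSet G S)
    (hM : IsKMatching G 3 M) (hMcard : M.card = kCoverNum G 3)
    (hflex : ∀ z, IsFlexible G z → ∃ w, IsAlpha3Critical G z w) :
    ∃! z, z ∈ ({u, v} : Finset V) ∧ z ∉ S := by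
  obtain ⟨l, hl, hul, hvl⟩ := huv.1.exists_mem_isKMatching hM hMcard
  have huvl : {u, v} ⊆ l.toFinset := by simp [Finset.insert_subset_iff, hul, hvl]
  obtain ⟨z, ⟨hzl, hzS⟩, hz⟩ := hS.existsUnique_notMem hM hMcard hl
  suffices hzuv : z ∈ ({u, v} : Finset V) from
    ⟨z, ⟨hzuv, hzS⟩, fun w hw ↦ hz w ⟨List.mem_toFinset.1 (huvl hw.1), hw.2⟩⟩
  by_contra hzuv
  have hzflex : IsFlexible G z := by
    obtain ⟨-, S', hS', huS'⟩ := huv.1.isFlexible_left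
    refine ⟨⟨S', hS', ?_⟩, S, hS, hzS⟩
    by_contra hzS'
    obtain rfl := (hS'.existsUnique_notMem hM hMcard hl).unique ⟨hzl, hzS'⟩ ⟨hul, huS'⟩
    exact hzuv (Finset.mem_insert_self z _)
  obtain ⟨w, hzw⟩ := hflex z hzflex
  have hlz : insert z {u, v} = l.toFinset := by
    refine (hM.1 l hl).toFinset_eq_of_subset
      (Finset.insert_subset (List.mem_toFinset.2 hzl) huvl) ?_
    rw [Finset.card_insert_of_notMem hzuv, Finset.card_pair huv.1.1.ne]
  have hwl := hM.isCriticalClosed_toFinset hMcard hl hzw (List.mem_toFinset.2 hzl)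
  have hwuv : w ∈ ({u, v} : Finset V) :=
    (Finset.mem_insert.1 (hlz ▸ hwl)).resolve_left hzw.1.ne'
  exact hzuv (huv.isCriticalClosed hzw.symm hwuv)

lemma IsMaxDissocSet.existsUnique_notMem_of_mem_criticalBlocks (hS : IsMaxDissocSet G S)
    (hM : IsKMatching G 3 M) (hMcard : M.card = kCoverNum G 3)
    (hflex : ∀ z, IsFlexible G z → ∃ w, IsAlpha3Critical G z w) (hB : B ∈ criticalBlocks G) :
    ∃! z, z ∈ B ∧ z ∉ S := by
  obtain hB | ⟨u, v, huv, rfl⟩ := mem_criticalBlocks.1 hB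
  · obtain ⟨l, hl, rfl⟩ := exists_eq_toFinset_of_mem_criticalThreePaths hM hMcard hB
    simpa only [List.mem_toFinset] using hS.existsUnique_notMem hM hMcard hl
  · exact huv.existsUnique_notMem hS hM hMcard hflex

end CriticalBlocks

lemma card_le_prod_card_of_existsUnique_notMem {α : Type*} {𝒮 𝓑 : Finset (Finset α)}
    (hmiss : ∀ S ∈ 𝒮, ∀ B ∈ 𝓑, ∃! z, z ∈ B ∧ z ∉ S)
    (hcover : ∀ S ∈ 𝒮, ∀ S' ∈ 𝒮, ∀ z ∈ S, z ∉ S' → ∃ B ∈ 𝓑, z ∈ B) :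
    𝒮.card ≤ ∏ B ∈ 𝓑, B.card := by
  classical
  rw [← Finset.card_pi 𝓑 fun B ↦ B]
  refine Finset.card_le_card_of_forall_subsingleton (fun S f ↦ ∀ B hB, f B hB ∉ S)
    (fun S hS ↦ ?_) fun f hf ↦ ?_
  · choose f hf using fun B hB ↦ (hmiss S hS B hB).exists
    exact ⟨f, Finset.mem_pi.2 fun B hB ↦ (hf B hB).1, fun B hB ↦ (hf B hB).2⟩
  · have hsubset : ∀ S ∈ 𝒮, ∀ S' ∈ 𝒮, (∀ B hB, f B hB ∉ S) → (∀ B hB, f B hB ∉ S') →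
        S ⊆ S' := by
      intro S hS S' hS' hfS hfS' z hzS
      by_contra hzS'
      obtain ⟨B, hB, hzB⟩ := hcover S hS S' hS' z hzS hzS'
      obtain rfl := (hmiss S' hS' B hB).unique ⟨hzB, hzS'⟩
        ⟨Finset.mem_pi.1 hf B hB, hfS' B hB⟩
      exact hfS B hB hzS
    exact fun S hS S' hS' ↦ (hsubset S hS.1 S' hS'.1 hS.2 hS'.2).antisymm
      (hsubset S' hS'.1 S hS.1 hS'.2 hS.2)

theorem tree_numMaxDissoc_le_of_critical_counts_general {V : Type*} [Finite V] [DecidableEq V]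
    (G : SimpleGraph V) (hG : kMatchNum G 3 = kCoverNum G 3) (k x y : ℕ)
    (hk : {v : V | IsFlexible G v}.ncard = k)
    (hx : {s : Finset V | ∃ a b c : V, s = {a, b, c} ∧ IsKPath G 3 [a, b, c] ∧
      IsAlpha3Critical G a b ∧ IsAlpha3Critical G b c}.ncard = x)
    (hy : {e : Sym2 V | ∃ u v : V, e = s(u, v) ∧ IsInsulated G u v}.ncard = y)
    (hxy : k = 3 * x + 2 * y) :
    {S : Finset V | IsMaxDissocSet G S}.ncard ≤ 3 ^ x * 2 ^ y := by
  change (criticalThreePaths G).ncard = x at hx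
  change (insulatedEdges G).ncard = y at hy
  subst hk hx hy
  obtain ⟨M, hM, hMcard⟩ := exists_isMaxKMatching (G := G) three_ne_zero
  rw [hG] at hMcard
  have hblock : ∀ z, IsFlexible G z → ∃ B ∈ criticalBlocks G, z ∈ B := fun z hz ↦
    hz.exists_mem_criticalBlocks hM hMcard hxy.le
  have hcritical : ∀ z, IsFlexible G z → ∃ w, IsAlpha3Critical G z w := fun z hz ↦
    have ⟨_, hB, hzB⟩ := hblock z hz
    exists_isAlpha3Critical_of_mem_criticalBlocks hB hzB
  let 𝒮 := (Set.toFinite {S : Finset V | IsMaxDissocSet G S}).toFinset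
  have hmax : ∀ S ∈ 𝒮, IsMaxDissocSet G S := fun S ↦ (Set.Finite.mem_toFinset _).1
  calc {S : Finset V | IsMaxDissocSet G S}.ncard
      = 𝒮.card := Set.ncard_eq_toFinset_card _
    _ ≤ ∏ B ∈ criticalBlocks G, B.card :=
        card_le_prod_card_of_existsUnique_notMem
          (fun S hS B hB ↦
            (hmax S hS).existsUnique_notMem_of_mem_criticalBlocks hM hMcard hcritical hB)
          fun S hS S' hS' z hzS hzS' ↦
            hblock z ⟨⟨S, hmax S hS, hzS⟩, S', hmax S' hS', hzS'⟩
    _ = 3 ^ _ * 2 ^ _ := prod_card_criticalBlocks id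

/-- Let `T` be a tree with exactly `k` flexible vertices.  If `T` has exactly `x`
critical `3`-paths and exactly `(k - 3x)/2 = y` insulated `α₃`-critical edges
(so `k = 3x + 2y`), then `T` has at most `3^x * 2^y` maximum dissociation sets. -/
theorem tree_numMaxDissoc_le_of_critical_counts {V : Type*} [Fintype V] [DecidableEq V]
    (T : SimpleGraph V) (hT : T.IsTree) (k x y : ℕ)
    (hk : {v : V | IsFlexible T v}.ncard = k)
    (hx : {s : Finset V | ∃ a b c : V, s = {a, b, c} ∧ IsKPath T 3 [a, b, c] ∧
      IsAlpha3Critical T a b ∧ IsAlpha3Critical T b c}.ncard = x)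
    (hy : {e : Sym2 V | ∃ u v : V, e = s(u, v) ∧ IsInsulated T u v}.ncard = y)
    (hxy : k = 3 * x + 2 * y) :
    {S : Finset V | IsMaxDissocSet T S}.ncard ≤ 3 ^ x * 2 ^ y :=
  tree_numMaxDissoc_le_of_critical_counts_general T
    (kMatchNum_eq_kCoverNum_of_isAcyclic hT.isAcyclic three_ne_zero) k x y hk hx hy hxy
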